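/- For all integers q ≥ 2, ℓ ≥ 1, n ≥ ℓ and every x ∈ Z_q^n, the size of the single palindromic duplication sphere satisfies |S_{π,ℓ}(x)| ≤ n − ℓ + 2 − Σ_{i=ℓ+1}^{n} (i−ℓ) r_i(x), where r_i(x) is the number of runs of x of length exactly i. -/

import Mathlib

/-!
A palindromic duplication of `a :: t` either duplicates the prefix of length `ℓ`, or is `a`
followed by a palindromic duplication of `t`; so prepending a letter creates at most one new
word. If the first run of `a :: t` is longer than `ℓ`, duplicating the prefix only lengthens that
run by `ℓ`, and duplicating the first `ℓ` letters of `t` has the same effect: no new word is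
created. These are exactly the letters that increase the excess `∑ (|r| - ℓ)⁺` over the runs `r`,
each time by one. By induction on the word, the number of words obtained by exactly one
duplication, plus the excess, is at most `n + 1 - ℓ`. The sphere has at most one further element,
the word itself.
-/

namespace DupPaper

variable {α : Type*}

/-- `y` is obtained from `x` by one tandem duplication of length `ℓ`. -/
def TDup (ℓ : ℕ) (x y : List α) : Prop :=
  ∃ u v w : List α, v.length = ℓ ∧ x = u ++ v ++ w ∧ y = u ++ v ++ v ++ w

/-- `y` is obtained from `x` by one tandem deletion of length `ℓ`. -/
def TDel (ℓ : ℕ) (x y : List α) : Prop :=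
  ∃ u v w : List α, v.length = ℓ ∧ x = u ++ v ++ v ++ w ∧ y = u ++ v ++ w

/-- `y` is obtained from `x` by one palindromic duplication of length `ℓ`. -/
def PDup (ℓ : ℕ) (x y : List α) : Prop :=
  ∃ u v w : List α, v.length = ℓ ∧ x = u ++ v ++ w ∧ y = u ++ v ++ v.reverse ++ w

/-- `y` is obtained from `x` by one palindromic deletion of length `ℓ`. -/
def PDel (ℓ : ℕ) (x y : List α) : Prop :=
  ∃ u v w : List α, v.length = ℓ ∧ x = u ++ v ++ v.reverse ++ w ∧ y = u ++ v ++ w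

/-- `y` is reached from `x` by exactly `k` steps of the relation `rel`. -/
def reachK (rel : List α → List α → Prop) : ℕ → List α → List α → Prop
  | 0, x, y => x = y
  | k + 1, x, y => ∃ z, rel x z ∧ reachK rel k z y

/-- The sphere of all words reachable from `x` by at most `t` operations of type `rel`
(in particular it contains `x` itself). -/
def sphere (rel : List α → List α → Prop) (t : ℕ) (x : List α) : Set (List α) :=
  {y | ∃ k ≤ t, reachK rel k x y}

/-- A code `C` is `t`-error correcting for the error type `rel` if distinct codewords have
disjoint spheres. -/
def Correcting (rel : List α → List α → Prop) (t : ℕ) (C : Set (List α)) : Prop :=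
  ∀ c₁ ∈ C, ∀ c₂ ∈ C, (sphere rel t c₁ ∩ sphere rel t c₂).Nonempty → c₁ = c₂

/-- The list of maximal runs (maximal blocks of identical consecutive symbols) of a word. -/
def runs [DecidableEq α] : List α → List (List α)
  | [] => []
  | a :: rest =>
    match runs rest with
    | [] => [[a]]
    | r :: rs => if r.head? = some a then (a :: r) :: rs else [a] :: r :: rs

/-- `r(x)`: the number of runs of `x`. -/
def numRuns [DecidableEq α] (x : List α) : ℕ := (runs x).length

/-- `r_i(x)`: the number of runs of `x` of length exactly `i`. -/
def numRunsEq [DecidableEq α] (x : List α) (i : ℕ) : ℕ :=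
  ((runs x).filter (fun r => r.length = i)).length

/-- `r_{≥ i}(x)`: the number of runs of `x` of length at least `i`. -/
def numRunsGe [DecidableEq α] (x : List α) (i : ℕ) : ℕ :=
  ((runs x).filter (fun r => i ≤ r.length)).length

/-- `r_{I,2}(x)`: the number of runs of length exactly `2` located in the interior of `x`,
i.e. runs that are neither the first nor the last run of `x`. -/
def numInteriorRuns2 [DecidableEq α] (x : List α) : ℕ :=
  ((((runs x).drop 1).dropLast).filter (fun r => r.length = 2)).length

/-- The second component `v` of the `ℓ`-step derivative `φ_ℓ(x) = (u, v)`: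
`v = (x_{ℓ+1}, …, x_n) − (x_1, …, x_{n−ℓ})` componentwise in `Z_q`. -/
def derivV (q ℓ : ℕ) (x : List (ZMod q)) : List (ZMod q) :=
  List.zipWith (· - ·) (x.drop ℓ) x

/-- Hamming weight: the number of nonzero entries. -/
def wtH {q : ℕ} (v : List (ZMod q)) : ℕ := (v.filter (fun a => a ≠ 0)).length

/-- The lengths `(m_0, m_1, …, m_p)` of the (possibly empty) maximal zero runs of `v`,
where `v = (0^{m_0}, w_1, 0^{m_1}, w_2, …, w_p, 0^{m_p})` with all `w_i ≠ 0`. -/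
def zeroRunLengths {q : ℕ} : List (ZMod q) → List ℕ
  | [] => [0]
  | a :: rest =>
    let t := zeroRunLengths rest
    if a = 0 then
      match t with
      | [] => [1]
      | m :: ms => (m + 1) :: ms
    else 0 :: t

/-- The `ℓ`-zero signature `σ_ℓ(v) = (⌊m_0/ℓ⌋, …, ⌊m_p/ℓ⌋)` of `v = derivV q ℓ x`. -/
def sig (q ℓ : ℕ) (x : List (ZMod q)) : List ℕ :=
  (zeroRunLengths (derivV q ℓ x)).map (· / ℓ)

/-- The trunk `μ_ℓ(v)`: every maximal zero run of length `m` is shortened to length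
`m mod ℓ`. -/
def trunk (q ℓ : ℕ) (v : List (ZMod q)) : List (ZMod q) :=
  ((runs v).map (fun r =>
    if r.head? = some (0 : ZMod q) then List.replicate (r.length % ℓ) (0 : ZMod q) else r)).flatten

/-- The root `ρ_ℓ(x) = (u, μ_ℓ(v))` where `φ_ℓ(x) = (u, v)` is the `ℓ`-step derivative. -/
def root (q ℓ : ℕ) (x : List (ZMod q)) : List (ZMod q) × List (ZMod q) :=
  (x.take ℓ, trunk q ℓ (derivV q ℓ x))

/-- `ℓ1`-distance of two lists of naturals. -/
def l1diff (a b : List ℕ) : ℕ := (List.zipWith (fun s t => max s t - min s t) a b).sum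

/-- The tandem duplication distance `d_{τ,ℓ}`. -/
def tdDist (q ℓ : ℕ) (x₁ x₂ : List (ZMod q)) : ℕ∞ :=
  if root q ℓ x₁ = root q ℓ x₂ then (l1diff (sig q ℓ x₁) (sig q ℓ x₂) : ℕ∞) else ⊤

/-- The palindromic duplication `π_{i,ℓ}(x) = (u v v^R w)` at position `i`,
where `x = (u v w)`, `|u| = i`, `|v| = ℓ`. -/
def pdupAt (i ℓ : ℕ) (x : List α) : List α :=
  x.take (i + ℓ) ++ ((x.drop i).take ℓ).reverse ++ x.drop (i + ℓ)

/-- The result `(u v w)` of the palindromic deletion `π^δ_{i,ℓ}` applied to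
`x = (u v v^R w)` with `|u| = i`, `|v| = ℓ`. -/
def pdelAt (i ℓ : ℕ) (x : List α) : List α :=
  x.take (i + ℓ) ++ x.drop (i + 2 * ℓ)

/-- The palindromic deletion `π^δ_{i,ℓ}` is defined at position `i` of `x`, i.e. `x` has the
form `(u v v^R w)` with `|u| = i` and `|v| = ℓ`. -/
def PDelDefinedAt (q ℓ i : ℕ) (x : List (ZMod q)) : Prop :=
  ∃ u v w : List (ZMod q), u.length = i ∧ v.length = ℓ ∧ x = u ++ v ++ v.reverse ++ w

/-- `A(n', ℓ', ω)`: the number of words in `Z_q^{n'}` whose maximal zero runs all have length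
at most `ℓ'` and whose Hamming weight is `ω`. -/
noncomputable def Acount (q n' ℓ' ω : ℕ) : ℕ :=
  {x : Fin n' → ZMod q | wtH (List.ofFn x) = ω ∧
    ∀ r ∈ runs (List.ofFn x), r.head? = some (0 : ZMod q) → r.length ≤ ℓ'}.ncard

/-- Integer binomial coefficient with the conventions `C(a,b) = 0` for `a ≥ 0 > b` or
`0 ≤ a < b`, `C(-1,-1) = 1`, and `C(a,-1) = 0` for `a ≥ 0`. -/
def ichoose (a b : ℤ) : ℕ :=
  if a = -1 ∧ b = -1 then 1
  else if 0 ≤ a ∧ 0 ≤ b then Nat.choose a.toNat b.toNat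
  else 0

/-- `r^{(0)}(A^π_ℓ(x))`: the number of maximal blocks of consecutive all-zero columns of the
matrix `A^π_ℓ(x) ∈ Z_q^{ℓ × (n−2ℓ+1)}` whose entry in row `s` and column `c`
(`1 ≤ s ≤ ℓ`, `1 ≤ c ≤ n−2ℓ+1`) is `x_{2ℓ+c−s} − x_{c+s−1}`. -/
def zeroColBlocks (q ℓ n : ℕ) (x : List (ZMod q)) : ℕ :=
  ((runs ((List.range (n - 2 * ℓ + 1)).map (fun c =>
      (List.range ℓ).all (fun s =>
        x.getD (2 * ℓ + c - s - 1) (0 : ZMod q) = x.getD (c + s) (0 : ZMod q))))).filter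
    (fun r => r.head? = some true)).length

theorem sphere_one (rel : List α → List α → Prop) (x : List α) :
    sphere rel 1 x = insert x {y | rel x y} := by
  ext y
  constructor
  · rintro ⟨k, hk, h⟩
    interval_cases k
    · exact Or.inl h.symm
    · obtain ⟨z, hz, rfl⟩ := h
      exact Or.inr hz
  · rintro (rfl | h)
    · exact ⟨0, Nat.zero_le 1, rfl⟩
    · exact ⟨1, le_rfl, y, h, rfl⟩

section PalindromicDuplication

variable {ℓ : ℕ}

/-- The set of words obtained from `x` by exactly one palindromic duplication of length `ℓ`. -/
def pdups (ℓ : ℕ) (x : List α) : Set (List α) := {y | PDup ℓ x y}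

theorem mem_pdups_iff {x y : List α} :
    y ∈ pdups ℓ x ↔ ∃ i, i + ℓ ≤ x.length ∧ pdupAt i ℓ x = y := by
  constructor
  · rintro ⟨u, v, w, rfl, rfl, rfl⟩
    exact ⟨u.length, by simp, by
      simp [pdupAt, List.take_append, List.drop_append, List.take_of_length_le,
        List.drop_eq_nil_of_le]⟩
  · rintro ⟨i, hi, rfl⟩
    have hsplit : x.take i ++ (x.drop i).take ℓ = x.take (i + ℓ) := List.take_add.symm
    refine ⟨x.take i, (x.drop i).take ℓ, x.drop (i + ℓ), ?_, ?_, ?_⟩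
    · simp only [List.length_take, List.length_drop]
      omega
    · rw [hsplit, List.take_append_drop]
    · rw [hsplit, pdupAt]

theorem pdups_eq_image_pdupAt (ℓ : ℕ) (x : List α) :
    pdups ℓ x = (pdupAt · ℓ x) '' Set.Iio (x.length + 1 - ℓ) := by
  ext y
  have hlt (i : ℕ) : i < x.length + 1 - ℓ ↔ i + ℓ ≤ x.length := by omega
  simp only [mem_pdups_iff, Set.mem_image, Set.mem_Iio, hlt]

theorem finite_pdups (ℓ : ℕ) (x : List α) : (pdups ℓ x).Finite := by
  rw [pdups_eq_image_pdupAt]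
  exact (Set.finite_Iio _).image _

theorem ncard_pdups_le (ℓ : ℕ) (x : List α) : (pdups ℓ x).ncard ≤ x.length + 1 - ℓ := by
  rw [pdups_eq_image_pdupAt]
  exact (Set.ncard_image_le (Set.finite_Iio _)).trans (Set.ncard_Iio_nat _).le

theorem pdupAt_succ_cons (i ℓ : ℕ) (a : α) (t : List α) :
    pdupAt (i + 1) ℓ (a :: t) = a :: pdupAt i ℓ t := by
  simp [pdupAt, Nat.add_right_comm i 1 ℓ]

theorem pdups_cons_subset (ℓ : ℕ) (a : α) (t : List α) :
    pdups ℓ (a :: t) ⊆ insert (pdupAt 0 ℓ (a :: t)) (List.cons a '' pdups ℓ t) := by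
  intro y hy
  obtain ⟨i, hi, rfl⟩ := mem_pdups_iff.mp hy
  cases i with
  | zero => exact Set.mem_insert _ _
  | succ i =>
    have hi' : i + ℓ ≤ t.length := by
      rw [List.length_cons] at hi
      omega
    rw [pdupAt_succ_cons]
    exact Or.inr ⟨_, mem_pdups_iff.mpr ⟨i, hi', rfl⟩, rfl⟩

theorem pdupAt_zero_cons_of_replicate_prefix {a : α} {t : List α}
    (h : List.replicate ℓ a <+: t) : pdupAt 0 ℓ (a :: t) = a :: pdupAt 0 ℓ t := by
  obtain ⟨w, rfl⟩ := h
  have hcons (s : List α) : a :: (List.replicate ℓ a ++ s) = List.replicate ℓ a ++ a :: s := by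
    rw [← List.cons_append, ← List.replicate_succ, List.replicate_succ', List.append_assoc,
      List.singleton_append]
  have hdup (s : List α) :
      pdupAt 0 ℓ (List.replicate ℓ a ++ s) = List.replicate ℓ a ++ (List.replicate ℓ a ++ s) := by
    simp [pdupAt, -List.replicate_append_replicate]
  rw [hcons, hdup, hdup, hcons, hcons]

theorem pdups_cons_subset_of_replicate_prefix {a : α} {t : List α}
    (h : List.replicate ℓ a <+: t) : pdups ℓ (a :: t) ⊆ List.cons a '' pdups ℓ t := by
  have hlen : 0 + ℓ ≤ t.length := by simpa using h.length_le
  refine (pdups_cons_subset ℓ a t).trans (Set.insert_subset ?_ subset_rfl)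
  rw [pdupAt_zero_cons_of_replicate_prefix h]
  exact ⟨_, mem_pdups_iff.mpr ⟨0, hlen, rfl⟩, rfl⟩

theorem ncard_pdups_cons_le (ℓ : ℕ) (a : α) (t : List α) :
    (pdups ℓ (a :: t)).ncard ≤ (pdups ℓ t).ncard + 1 :=
  calc (pdups ℓ (a :: t)).ncard
    _ ≤ (insert (pdupAt 0 ℓ (a :: t)) (List.cons a '' pdups ℓ t)).ncard :=
      Set.ncard_le_ncard (pdups_cons_subset ℓ a t) (((finite_pdups ℓ t).image _).insert _)
    _ ≤ (List.cons a '' pdups ℓ t).ncard + 1 := Set.ncard_insert_le _ _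
    _ ≤ (pdups ℓ t).ncard + 1 := Nat.add_le_add_right (Set.ncard_image_le (finite_pdups ℓ t)) 1

theorem ncard_pdups_cons_le_of_replicate_prefix {a : α} {t : List α}
    (h : List.replicate ℓ a <+: t) : (pdups ℓ (a :: t)).ncard ≤ (pdups ℓ t).ncard :=
  calc (pdups ℓ (a :: t)).ncard
    _ ≤ (List.cons a '' pdups ℓ t).ncard :=
      Set.ncard_le_ncard (pdups_cons_subset_of_replicate_prefix h) ((finite_pdups ℓ t).image _)
    _ ≤ (pdups ℓ t).ncard := Set.ncard_image_le (finite_pdups ℓ t)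

end PalindromicDuplication

section Runs

variable [DecidableEq α]

theorem runs_cons (a : α) (t : List α) :
    runs (a :: t) = [a] :: runs t ∨
      ∃ r rs, runs t = r :: rs ∧ r.head? = some a ∧ runs (a :: t) = (a :: r) :: rs := by
  rw [runs]
  split
  case h_1 h => simp [h]
  case h_2 r rs h =>
    split_ifs with hr
    · exact Or.inr ⟨r, rs, h, hr, rfl⟩
    · exact Or.inl (by rw [h])

theorem flatten_runs (x : List α) : (runs x).flatten = x := by
  induction x with
  | nil => rfl
  | cons a t ih =>
    obtain h | ⟨r, rs, ht, -, h⟩ := runs_cons a t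
    · rw [h, List.flatten_cons, ih, List.singleton_append]
    · rw [h, List.flatten_cons, List.cons_append, ← List.flatten_cons, ← ht, ih]

theorem length_le_of_mem_runs {x r : List α} (hr : r ∈ runs x) : r.length ≤ x.length := by
  simpa only [flatten_runs] using (List.sublist_flatten_of_mem hr).length_le

theorem eq_replicate_of_mem_runs {x r : List α} {a : α} (hr : r ∈ runs x)
    (ha : r.head? = some a) : r = List.replicate r.length a := by
  induction x generalizing r a with
  | nil => simp [runs] at hr
  | cons b t ih =>
    obtain h | ⟨r', rs, ht, hb, h⟩ := runs_cons b t <;> rw [h, List.mem_cons] at hr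
    · obtain rfl | hr := hr
      · simpa using ha
      · exact ih hr ha
    · obtain rfl | hr := hr
      · obtain rfl : b = a := by simpa using ha
        rw [List.length_cons, List.replicate_succ, ← ih (by simp [ht]) hb]
      · exact ih (by simp [ht, hr]) ha

theorem replicate_prefix_of_runs_eq_cons {k : ℕ} {x r : List α} {rs : List (List α)} {a : α}
    (hx : runs x = r :: rs) (ha : r.head? = some a) (hk : k ≤ r.length) :
    List.replicate k a <+: x := by
  have hmem : r ∈ runs x := by simp [hx]
  have hkr : List.replicate k a <+: List.replicate r.length a :=
    List.prefix_replicate_iff.mpr ⟨by simpa using hk, by simp⟩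
  rw [← eq_replicate_of_mem_runs hmem ha] at hkr
  have hrx : r <+: x := ⟨rs.flatten, by rw [← List.flatten_cons, ← hx, flatten_runs]⟩
  exact hkr.trans hrx

end Runs

theorem sum_map_comp_eq_sum_mul_length_filter {ι κ R : Type*} [DecidableEq κ] [Semiring R]
    (l : List ι) (g : ι → κ) (f : κ → R) (s : Finset κ) (hs : ∀ j ∈ l, g j ∉ s → f (g j) = 0) :
    (l.map (fun j => f (g j))).sum = ∑ i ∈ s, f i * ((l.filter (fun j => g j = i)).length : R) := by
  induction l with
  | nil => simp
  | cons j l ih =>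
    have hfilter (i : κ) : (((j :: l).filter (fun j => g j = i)).length : R) =
        (if g j = i then 1 else 0) + ((l.filter (fun j => g j = i)).length : R) := by
      by_cases h : g j = i <;> simp [h, add_comm]
    have hj : (if g j ∈ s then f (g j) else 0) = f (g j) :=
      ite_eq_left_iff.mpr fun h => (hs j List.mem_cons_self h).symm
    have ih := ih fun k hk => hs k (List.mem_cons_of_mem j hk)
    simp only [hfilter, mul_add, Finset.sum_add_distrib, mul_ite, mul_one, mul_zero,
      Finset.sum_ite_eq, List.map_cons, List.sum_cons, ih, hj]

section Excess

variable [DecidableEq α]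

/-- The total excess `∑ (|r| - ℓ)⁺` of the runs `r` of `x` over the length `ℓ`; the positive part
is encoded by truncated subtraction. -/
def excess (ℓ : ℕ) (x : List α) : ℕ := ((runs x).map (fun r => r.length - ℓ)).sum

theorem excess_cons_le (ℓ : ℕ) (a : α) (t : List α) : excess ℓ (a :: t) ≤ excess ℓ t + 1 := by
  obtain h | ⟨r, rs, ht, -, h⟩ := runs_cons a t
  · simp only [excess, h, List.map_cons, List.sum_cons, List.length_singleton]
    omega
  · simp only [excess, h, ht, List.map_cons, List.sum_cons, List.length_cons]
    omega

theorem excess_cons_of_not_replicate_prefix {ℓ : ℕ} {a : α} {t : List α}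
    (hpre : ¬ List.replicate ℓ a <+: t) : excess ℓ (a :: t) = excess ℓ t := by
  obtain h | ⟨r, rs, ht, ha, h⟩ := runs_cons a t
  · have hℓ : ℓ ≠ 0 := by
      rintro rfl
      exact hpre List.nil_prefix
    simp only [excess, h, List.map_cons, List.sum_cons, List.length_singleton]
    omega
  · have hr : r.length < ℓ := by
      by_contra! hle
      exact hpre (replicate_prefix_of_runs_eq_cons ht ha hle)
    simp only [excess, h, ht, List.map_cons, List.sum_cons, List.length_cons]
    omega

theorem cast_excess (ℓ : ℕ) (x : List α) :
    (excess ℓ x : ℤ) =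
      ∑ i ∈ Finset.Icc (ℓ + 1) x.length, ((i : ℤ) - ℓ) * (numRunsEq x i : ℤ) := by
  have hzero : ∀ r ∈ runs x, r.length ∉ Finset.Icc (ℓ + 1) x.length → r.length - ℓ = 0 := by
    intro r hr hmem
    have := length_le_of_mem_runs hr
    rw [Finset.mem_Icc] at hmem
    omega
  rw [excess, sum_map_comp_eq_sum_mul_length_filter (runs x) List.length (· - ℓ) _ hzero,
    Nat.cast_sum]
  refine Finset.sum_congr rfl fun i hi => ?_
  have hℓi : ℓ ≤ i := (Nat.le_succ ℓ).trans (Finset.mem_Icc.mp hi).1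
  rw [Nat.cast_mul, Nat.cast_sub hℓi, numRunsEq, Nat.cast_id]

end Excess

-- For `x.length < ℓ` the truncated right-hand side is zero, and so are both terms on the left.
theorem ncard_pdups_add_excess_le [DecidableEq α] (ℓ : ℕ) (x : List α) :
    (pdups ℓ x).ncard + excess ℓ x ≤ x.length + 1 - ℓ := by
  induction x with
  | nil => exact ncard_pdups_le ℓ []
  | cons a t ih =>
    have hlen : (a :: t).length = t.length + 1 := List.length_cons
    by_cases hpre : List.replicate ℓ a <+: t
    · have hcard := ncard_pdups_cons_le_of_replicate_prefix hpre
      have hexcess := excess_cons_le ℓ a t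
      have hℓ : ℓ ≤ t.length := by simpa using hpre.length_le
      omega
    · have hcard := ncard_pdups_cons_le ℓ a t
      have hshort := ncard_pdups_le ℓ (a :: t)
      have hexcess := excess_cons_of_not_replicate_prefix hpre
      omega

theorem stmt9_general [DecidableEq α] {ℓ : ℕ} {x : List α} (hℓ : ℓ ≤ x.length) :
    ((sphere (PDup ℓ) 1 x).ncard : ℤ) ≤ (x.length : ℤ) - ℓ + 2 -
      ∑ i ∈ Finset.Icc (ℓ + 1) x.length, ((i : ℤ) - ℓ) * (numRunsEq x i : ℤ) := by
  have hsphere : (sphere (PDup ℓ) 1 x).ncard ≤ (pdups ℓ x).ncard + 1 := by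
    rw [sphere_one]
    exact Set.ncard_insert_le x (pdups ℓ x)
  have hpdups := ncard_pdups_add_excess_le ℓ x
  rw [← cast_excess]
  omega

/-- Upper bound on the single palindromic duplication sphere:
`|S_{π,ℓ}(x)| ≤ n − ℓ + 2 − Σ_{i=ℓ+1}^n (i−ℓ) r_i(x)`. -/
theorem stmt9 (q ℓ n : ℕ) (hq : 2 ≤ q) (hℓ : 1 ≤ ℓ) (hn : ℓ ≤ n)
    (x : List (ZMod q)) (hx : x.length = n) :
    ((sphere (PDup ℓ) 1 x).ncard : ℤ)
        ≤ (n : ℤ) - ℓ + 2 - ∑ i ∈ Finset.Icc (ℓ + 1) n, ((i : ℤ) - ℓ) * (numRunsEq x i : ℤ) := by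
  subst hx
  exact stmt9_general hn

end DupPaper
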